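/- Let Φ be a set of functional dependencies over a finite schema 𝓡 and let P⁺ be the preorder obtained from Φ. If Φ is forward repairable over an ordered partition P = [C_1,…,C_m] of 𝓡, then any two attributes a, a' with a ≡_{P⁺} a' belong to the same class of P. (Key step in the proof of Theorem 1(ii).) -/

import Mathlib

/-- A functional dependency over a set of attributes `α`: a pair `X → a`
with left-hand side `X` (a finite set of attributes) and right-hand side `a`. -/
structure FD (α : Type*) where
  lhs : Finset α
  rhs : α

/-- The projection `Φ[Z]` of a set of FDs over a set of attributes `Z`. -/
def proj {α : Type*} (Φ : Set (FD α)) (Z : Finset α) : Set (FD α) :=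
  {φ | φ ∈ Φ ∧ φ.lhs ⊆ Z ∧ φ.rhs ∈ Z}

/-- The prefix union `S_i = C_1 ∪ … ∪ C_i` of an ordered partition. -/
def prefS {α : Type*} [DecidableEq α] (P : List (Finset α)) (i : ℕ) : Finset α :=
  (P.take i).foldr (· ∪ ·) ∅

/-- `P = [C_1, …, C_m]` is an ordered partition of the (finite) schema:
a list of pairwise disjoint nonempty classes whose union is the whole schema. -/
def OrderedPartition {α : Type*} [DecidableEq α] [Fintype α] (P : List (Finset α)) : Prop :=
  (∀ C ∈ P, C.Nonempty) ∧ P.Pairwise Disjoint ∧ P.foldr (· ∪ ·) ∅ = Finset.univ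

/-- `Φ` is forward repairable over `P`: for every `i`, every FD in
`Φ[S_i] \ Φ[S_{i-1}]` has its right-hand side in `C_i`. -/
def ForwardRepairable {α : Type*} [DecidableEq α] (P : List (Finset α)) (Φ : Set (FD α)) : Prop :=
  ∀ (i : ℕ) (h : i < P.length),
    ∀ φ ∈ proj Φ (prefS P (i + 1)) \ proj Φ (prefS P i), φ.rhs ∈ P.get ⟨i, h⟩

/-- The base relation `P_Φ` obtained from a set of FDs: it contains all pairs
`(a, a)` and all pairs `(b, a)` with `b ∈ X` for some FD `X → a` in `Φ`. -/
def PPhi {α : Type*} (Φ : Set (FD α)) : α → α → Prop :=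
  fun b a => b = a ∨ ∃ φ ∈ Φ, φ.rhs = a ∧ b ∈ φ.lhs

/-- The preorder `P⁺` obtained from `Φ`: the transitive closure of `P_Φ`. -/
def Pplus {α : Type*} (Φ : Set (FD α)) : α → α → Prop :=
  Relation.TransGen (PPhi Φ)

/-- The equivalence `a ≡_{P⁺} a'`: mutual `P⁺`-comparability. -/
def eqvP {α : Type*} (Φ : Set (FD α)) (a a' : α) : Prop :=
  Pplus Φ a a' ∧ Pplus Φ a' a

/-- The ordered partition `P` is induced by the preorder `P⁺` obtained from `Φ`:
its classes are exactly the equivalence classes of `≡_{P⁺}`, and earlier classes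
are never `P⁺`-above later ones. -/
def InducedBy {α : Type*} (P : List (Finset α)) (Φ : Set (FD α)) : Prop :=
  (∀ a a' : α, eqvP Φ a a' ↔
      ∃ (i : ℕ) (h : i < P.length), a ∈ P.get ⟨i, h⟩ ∧ a' ∈ P.get ⟨i, h⟩) ∧
  (∀ (i j : ℕ) (hi : i < P.length) (hj : j < P.length), i < j →
      ∀ a ∈ P.get ⟨i, hi⟩, ∀ a' ∈ P.get ⟨j, hj⟩, ¬ Pplus Φ a' a)

theorem mem_foldr_union {α : Type*} [DecidableEq α] {l : List (Finset α)} {x : α} :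
    x ∈ l.foldr (· ∪ ·) ∅ ↔ ∃ C ∈ l, x ∈ C := by
  induction l with
  | nil => simp
  | cons C l ih => simp [ih]

theorem mem_prefS_succ {α : Type*} [DecidableEq α] {P : List (Finset α)} {i : ℕ}
    (hi : i < P.length) {x : α} :
    x ∈ prefS P (i + 1) ↔ x ∈ prefS P i ∨ x ∈ P.get ⟨i, hi⟩ := by
  simp only [prefS, mem_foldr_union, List.take_succ_eq_append_getElem hi, List.mem_append,
    List.mem_singleton, or_and_right, exists_or, exists_eq_left, List.get_eq_getElem]

theorem notMem_prefS_of_mem_get {α : Type*} [DecidableEq α] {P : List (Finset α)}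
    (hP : P.Pairwise Disjoint) {i : ℕ} (hi : i < P.length) {x : α} (hx : x ∈ P.get ⟨i, hi⟩) :
    x ∉ prefS P i := by
  simp only [prefS, mem_foldr_union, List.mem_take_iff_getElem]
  rintro ⟨C, ⟨j, hj, rfl⟩, hxj⟩
  exact Finset.disjoint_left.mp
    (List.pairwise_iff_getElem.mp hP j i (by omega) hi (by omega)) hxj hx

/-- Prefix unions are closed under passing from the right-hand side of an FD to its
left-hand side. -/
theorem ForwardRepairable.lhs_subset_prefS {α : Type*} [DecidableEq α] [Fintype α]
    {Φ : Set (FD α)} {P : List (Finset α)} (hP : OrderedPartition P)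
    (hfwd : ForwardRepairable P Φ) {φ : FD α} (hφ : φ ∈ Φ) {k : ℕ} (hk : k ≤ P.length)
    (hrhs : φ.rhs ∈ prefS P k) : φ.lhs ⊆ prefS P k := by
  induction hk using Nat.decreasingInduction with
  | self => simp [prefS, hP.2.2]
  | of_succ i hi ih =>
    have hrhs' : φ.rhs ∈ prefS P (i + 1) := (mem_prefS_succ hi).2 (Or.inl hrhs)
    by_contra hsub
    exact notMem_prefS_of_mem_get hP.2.1 hi
      (hfwd i hi φ ⟨⟨hφ, ih hrhs', hrhs'⟩, fun h => hsub h.2.1⟩) hrhs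

theorem ForwardRepairable.mem_prefS_of_Pplus {α : Type*} [DecidableEq α] [Fintype α]
    {Φ : Set (FD α)} {P : List (Finset α)} (hP : OrderedPartition P)
    (hfwd : ForwardRepairable P Φ) {k : ℕ} (hk : k ≤ P.length) {a b : α}
    (h : Pplus Φ b a) (ha : a ∈ prefS P k) : b ∈ prefS P k := by
  have step : ∀ {c d : α}, PPhi Φ c d → d ∈ prefS P k → c ∈ prefS P k := by
    rintro c d (rfl | ⟨φ, hφ, rfl, hc⟩) hd
    · exact hd
    · exact hfwd.lhs_subset_prefS hP hφ hk hd hc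
  induction h with
  | single h => exact step h ha
  | tail _ h ih => exact ih (step h ha)

/-- If `Φ` is forward repairable over an ordered partition `P`, then any two
attributes equivalent under `≡_{P⁺}` belong to the same class of `P`. -/
theorem forwardRepairable_eqv_same_class {α : Type*} [DecidableEq α] [Fintype α]
    (Φ : Set (FD α)) (P : List (Finset α))
    (hP : OrderedPartition P)
    (hfwd : ForwardRepairable P Φ)
    (a a' : α) (h : eqvP Φ a a') :
    ∃ (i : ℕ) (hi : i < P.length), a ∈ P.get ⟨i, hi⟩ ∧ a' ∈ P.get ⟨i, hi⟩ := by
  obtain ⟨C, hC, haC⟩ := mem_foldr_union.1 (hP.2.2 ▸ Finset.mem_univ a)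
  obtain ⟨⟨i, hi⟩, rfl⟩ := List.get_of_mem hC
  refine ⟨i, hi, haC, ?_⟩
  have ha' := hfwd.mem_prefS_of_Pplus hP hi h.2 ((mem_prefS_succ hi).2 (Or.inr haC))
  refine ((mem_prefS_succ hi).1 ha').resolve_left fun hmem => ?_
  exact notMem_prefS_of_mem_get hP.2.1 hi haC (hfwd.mem_prefS_of_Pplus hP hi.le h.1 hmem)
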